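/- Let R be a rigid subcategory of C, R₀ ∈ R and X ∈ R∗R[1]. If R₀ → U → X → R₀[1] is a triangle in C, then U ∈ R∗R[1]. -/

import Mathlib

/-!
Setting: `C` is a Hom-finite Krull–Schmidt `k`-linear triangulated category over an
algebraically closed field `k` (Krull–Schmidt is encoded as Hom-finiteness together with
idempotent completeness). Subcategories are identified with their classes of objects and
are always assumed full, closed under isomorphisms, direct sums and direct summands.
-/

open CategoryTheory CategoryTheory.Limits CategoryTheory.Pretriangulated Opposite

universe v u

variable {C : Type u} [Category.{v} C] [Preadditive C] [HasZeroObject C] [HasShift C ℤ]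
  [∀ n : ℤ, (shiftFunctor C n).Additive] [Pretriangulated C]

/-- `Y` is a direct summand (retract) of `X`. -/
def IsRetractOf {D : Type*} [Category D] (Y X : D) : Prop :=
  ∃ (s : Y ⟶ X) (r : X ⟶ Y), s ≫ r = 𝟙 Y

/-- `S` is a direct sum (biproduct) of `F` and `G`. -/
def IsDirectSumOf {D : Type*} [Category D] [Preadditive D] (S F G : D) : Prop :=
  ∃ (i : F ⟶ S) (j : G ⟶ S) (p : S ⟶ F) (q : S ⟶ G),
    i ≫ p = 𝟙 F ∧ j ≫ q = 𝟙 G ∧ i ≫ q = 0 ∧ j ≫ p = 0 ∧ p ≫ i + q ≫ j = 𝟙 S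

/-- A subcategory of an additive category, identified with its class of objects:
closed under isomorphisms, finite direct sums and direct summands. -/
def IsSubcat {D : Type*} [Category D] [Preadditive D] (S : Set D) : Prop :=
  (∀ ⦃X Y : D⦄, (X ≅ Y) → X ∈ S → Y ∈ S) ∧
  (∀ ⦃F G T : D⦄, F ∈ S → G ∈ S → IsDirectSumOf T F G → T ∈ S) ∧
  (∀ ⦃X Y : D⦄, X ∈ S → IsRetractOf Y X → Y ∈ S)

/-- `f : X ⟶ A` is a right `𝓧`-approximation of `A`:
every map `X' ⟶ A` with `X' ∈ 𝓧` factors through `f`. -/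
def IsRightApprox {D : Type*} [Category D] (𝓧 : Set D) {X A : D} (f : X ⟶ A) : Prop :=
  ∀ X' ∈ 𝓧, ∀ g : X' ⟶ A, ∃ h : X' ⟶ X, h ≫ f = g

/-- `f : A ⟶ X` is a left `𝓧`-approximation of `A`:
every map `A ⟶ X'` with `X' ∈ 𝓧` factors through `f`. -/
def IsLeftApprox {D : Type*} [Category D] (𝓧 : Set D) {A X : D} (f : A ⟶ X) : Prop :=
  ∀ X' ∈ 𝓧, ∀ g : A ⟶ X', ∃ h : X ⟶ X', f ≫ h = g

/-- `𝓧` is contravariantly finite: every object admits a right `𝓧`-approximation. -/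
def ContravariantlyFinite {D : Type*} [Category D] (𝓧 : Set D) : Prop :=
  ∀ A : D, ∃ X ∈ 𝓧, ∃ f : X ⟶ A, IsRightApprox 𝓧 f

/-- `𝓧` is covariantly finite: every object admits a left `𝓧`-approximation. -/
def CovariantlyFinite {D : Type*} [Category D] (𝓧 : Set D) : Prop :=
  ∀ A : D, ∃ X ∈ 𝓧, ∃ f : A ⟶ X, IsLeftApprox 𝓧 f

/-- `𝓧` is functorially finite. -/
def FunctoriallyFinite {D : Type*} [Category D] (𝓧 : Set D) : Prop :=
  ContravariantlyFinite 𝓧 ∧ CovariantlyFinite 𝓧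

/-- `𝓧 ∨ add M`: the smallest subcategory containing `𝓧` and `M`. -/
def veeAdd {D : Type*} [Category D] [Preadditive D] (𝓧 : Set D) (M : D) : Set D :=
  ⋂₀ {T : Set D | IsSubcat T ∧ 𝓧 ⊆ T ∧ M ∈ T}

/-- The shift `𝓢⟦n⟧` of a subcategory (closed under isomorphism). -/
def shiftSet (𝓢 : Set C) (n : ℤ) : Set C := {Y | ∃ X ∈ 𝓢, Nonempty (Y ≅ X⟦n⟧)}

/-- `𝓐 ∗ 𝓑`: the class of objects `M` admitting a distinguished triangle
`A → M → B → A⟦1⟧` with `A ∈ 𝓐` and `B ∈ 𝓑`. -/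
def starSet (𝓐 𝓑 : Set C) : Set C :=
  {M | ∃ A ∈ 𝓐, ∃ B ∈ 𝓑, ∃ (f : A ⟶ M) (g : M ⟶ B) (h : B ⟶ A⟦(1:ℤ)⟧),
    Triangle.mk f g h ∈ distTriang C}

/-- `𝓡 ∗ 𝓡[1]`, the class of two-term objects with respect to `𝓡`. -/
def twoTerm (𝓡 : Set C) : Set C := starSet 𝓡 (shiftSet 𝓡 1)

/-- `𝓡` is rigid: `Hom(R, R'[1]) = 0` for all `R, R' ∈ 𝓡`. -/
def IsRigidSubcat (𝓡 : Set C) : Prop :=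
  ∀ R ∈ 𝓡, ∀ R' ∈ 𝓡, ∀ φ : R ⟶ R'⟦(1:ℤ)⟧, φ = 0

/-- `φ` lies in the ideal `[𝓡[1]]` of morphisms factoring through an object of `𝓡⟦1⟧`. -/
def InShiftIdeal (𝓡 : Set C) {A B : C} (φ : A ⟶ B) : Prop :=
  ∃ R ∈ 𝓡, ∃ (a : A ⟶ R⟦(1:ℤ)⟧) (b : R⟦(1:ℤ)⟧ ⟶ B), φ = a ≫ b

/-- `𝓧` is `𝓡[1]`-rigid: `[𝓡[1]](𝓧, 𝓧[1]) = 0`. -/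
def IsRelRigid (𝓡 𝓧 : Set C) : Prop :=
  ∀ X ∈ 𝓧, ∀ X' ∈ 𝓧, ∀ φ : X ⟶ X'⟦(1:ℤ)⟧, InShiftIdeal 𝓡 φ → φ = 0

/-- `[𝓡[1]](M, 𝓧[1]) = 0`. -/
def relOrthTo (𝓡 𝓧 : Set C) (M : C) : Prop :=
  ∀ X ∈ 𝓧, ∀ φ : M ⟶ X⟦(1:ℤ)⟧, InShiftIdeal 𝓡 φ → φ = 0

/-- `[𝓡[1]](𝓧, M[1]) = 0`. -/
def relOrthFrom (𝓡 𝓧 : Set C) (M : C) : Prop :=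
  ∀ X ∈ 𝓧, ∀ φ : X ⟶ M⟦(1:ℤ)⟧, InShiftIdeal 𝓡 φ → φ = 0

/-- `𝓧 ⊆ 𝓡 ∗ 𝓡[1]` is two-term maximal `𝓡[1]`-rigid: it is `𝓡[1]`-rigid and for every
`M ∈ 𝓡 ∗ 𝓡[1]`, `[𝓡[1]](𝓧 ∨ add M, (𝓧 ∨ add M)[1]) = 0` implies `M ∈ 𝓧`. -/
def IsTwoTermMaxRelRigid (𝓡 𝓧 : Set C) : Prop :=
  𝓧 ⊆ twoTerm 𝓡 ∧ IsRelRigid 𝓡 𝓧 ∧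
  ∀ M ∈ twoTerm 𝓡, IsRelRigid 𝓡 (veeAdd 𝓧 M) → M ∈ 𝓧

/-- `𝓧 ⊆ 𝓡 ∗ 𝓡[1]` is two-term weak `𝓡[1]`-cluster tilting: `𝓡 ⊆ 𝓧[-1] ∗ 𝓧` and
`𝓧 = {M ∈ 𝓡 ∗ 𝓡[1] : [𝓡[1]](M, 𝓧[1]) = 0 and [𝓡[1]](𝓧, M[1]) = 0}`. -/
def IsTwoTermWeakRelCT (𝓡 𝓧 : Set C) : Prop :=
  𝓧 ⊆ twoTerm 𝓡 ∧
  (∀ R ∈ 𝓡, R ∈ starSet (shiftSet 𝓧 (-1)) 𝓧) ∧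
  (∀ M : C, M ∈ 𝓧 ↔ M ∈ twoTerm 𝓡 ∧ relOrthTo 𝓡 𝓧 M ∧ relOrthFrom 𝓡 𝓧 M)

/-- `𝓧 ⊆ 𝓡 ∗ 𝓡[1]` is two-term `𝓡[1]`-cluster tilting: `𝓧` is contravariantly finite and
`𝓧 = {M ∈ 𝓡 ∗ 𝓡[1] : [𝓡[1]](M, 𝓧[1]) = 0 and [𝓡[1]](𝓧, M[1]) = 0}`. -/
def IsTwoTermRelCT (𝓡 𝓧 : Set C) : Prop :=
  𝓧 ⊆ twoTerm 𝓡 ∧ ContravariantlyFinite 𝓧 ∧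
  (∀ M : C, M ∈ 𝓧 ↔ M ∈ twoTerm 𝓡 ∧ relOrthTo 𝓡 𝓧 M ∧ relOrthFrom 𝓡 𝓧 M)

/-!
Given triangles `P ⟶ U ⟶ X ⟶ P⟦1⟧` and `Q ⟶ X ⟶ A ⟶ Q⟦1⟧` with `P` and `Q` in the rigid
subcategory, the composite `Q ⟶ X ⟶ P⟦1⟧` vanishes, so `Q ⟶ X` lifts to a map `Q ⟶ U`. For a
suitable lift, the octahedral axiom would identify the cone `W` of the resulting `P ⊞ Q ⟶ U` with
`A`. Without that axiom, `A` and `W` are still both weak kernels of `(P ⊞ Q)⟦1⟧ ⟶ U⟦1⟧`, so their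
maps to `(P ⊞ Q)⟦1⟧` factor through each other. The composite `W ⟶ A ⟶ W` differs from `𝟙 W` by a
map factoring through `U ⟶ W`, hence through `A`. Thus `W` is a direct summand of `A ⊞ A`, which
is enough for membership in a subcategory.
-/

theorem IsRetractOf.map {D : Type*} [Category* D] {E : Type*} [Category* E] {X Y : D}
    (h : IsRetractOf Y X) (F : D ⥤ E) : IsRetractOf (F.obj Y) (F.obj X) := by
  obtain ⟨s, r, hsr⟩ := h
  exact ⟨F.map s, F.map r, by rw [← F.map_comp, hsr, F.map_id]⟩

section Additive

variable {D : Type*} [Category* D] [Preadditive D] {E : Type*} [Category* E] [Preadditive E]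

theorem IsDirectSumOf.map {S X Y : D} (h : IsDirectSumOf S X Y) (F : D ⥤ E) [F.Additive] :
    IsDirectSumOf (F.obj S) (F.obj X) (F.obj Y) := by
  obtain ⟨i, j, p, q, hip, hjq, hiq, hjp, htotal⟩ := h
  refine ⟨F.map i, F.map j, F.map p, F.map q, ?_, ?_, ?_, ?_, ?_⟩ <;>
    simp only [← F.map_comp, ← F.map_add, hip, hjq, hiq, hjp, htotal, F.map_id, F.map_zero]

theorem isDirectSumOf_biprod (X Y : D) [HasBinaryBiproduct X Y] : IsDirectSumOf (X ⊞ Y) X Y :=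
  ⟨biprod.inl, biprod.inr, biprod.fst, biprod.snd, biprod.inl_fst, biprod.inr_snd,
    biprod.inl_snd, biprod.inr_fst, biprod.total⟩

theorem IsSubcat.biprod_mem {S : Set D} (hS : IsSubcat S) {X Y : D} [HasBinaryBiproduct X Y]
    (hX : X ∈ S) (hY : Y ∈ S) : (X ⊞ Y) ∈ S :=
  hS.2.1 hX hY (isDirectSumOf_biprod X Y)

theorem IsSubcat.preimage {S : Set E} (hS : IsSubcat S) (F : D ⥤ E) [F.Additive] :
    IsSubcat (F.obj ⁻¹' S) :=
  ⟨fun _ _ e hX ↦ hS.1 (F.mapIso e) hX, fun _ _ _ hX hY h ↦ hS.2.1 hX hY (h.map F),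
    fun _ _ hX h ↦ hS.2.2 hX (h.map F)⟩

theorem isRetractOf_biprod_of_comp_add_comp_eq_id {W X Y : D} [HasBinaryBiproduct X Y]
    {w : W ⟶ X} {u : X ⟶ W} {s : W ⟶ Y} {r : Y ⟶ W} (h : w ≫ u + s ≫ r = 𝟙 W) :
    IsRetractOf W (X ⊞ Y) :=
  ⟨biprod.lift w s, biprod.desc u r, by rw [biprod.lift_desc, h]⟩

theorem comp_map_biprod_desc (F : D ⥤ E) [F.Additive] {X Y Z : D} [HasBinaryBiproduct X Y]
    {W : E} (φ : W ⟶ F.obj (X ⊞ Y)) (x : X ⟶ Z) (y : Y ⟶ Z) :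
    φ ≫ F.map (biprod.desc x y) =
      (φ ≫ F.map biprod.fst) ≫ F.map x + (φ ≫ F.map biprod.snd) ≫ F.map y := by
  rw [biprod.desc_eq, F.map_add, F.map_comp, F.map_comp, Preadditive.comp_add, Category.assoc,
    Category.assoc]

theorem map_biprod_hom_ext (F : D ⥤ E) [F.Additive] {X Y : D} [HasBinaryBiproduct X Y] {W : E}
    {φ ψ : W ⟶ F.obj (X ⊞ Y)} (hfst : φ ≫ F.map biprod.fst = ψ ≫ F.map biprod.fst)
    (hsnd : φ ≫ F.map biprod.snd = ψ ≫ F.map biprod.snd) : φ = ψ := by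
  have : PreservesBinaryBiproduct X Y F := preservesBinaryBiproduct_of_preservesBiproduct F X Y
  exact BinaryFan.IsLimit.hom_ext
    (isBinaryBilimitOfPreserves F (BinaryBiproduct.isBilimit X Y)).isLimit hfst hsnd

theorem exists_map_biprod_lift (F : D ⥤ E) [F.Additive] {X Y : D} [HasBinaryBiproduct X Y]
    {W : E} (x : W ⟶ F.obj X) (y : W ⟶ F.obj Y) :
    ∃ φ : W ⟶ F.obj (X ⊞ Y), φ ≫ F.map biprod.fst = x ∧ φ ≫ F.map biprod.snd = y := by
  refine ⟨x ≫ F.map biprod.inl + y ≫ F.map biprod.inr, ?_, ?_⟩ <;> simp [← F.map_comp]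

theorem IsSubcat.shiftSet_eq_preimage [HasShift D ℤ] {S : Set D} (hS : IsSubcat S) (n : ℤ) :
    shiftSet S n = (shiftFunctor D (-n)).obj ⁻¹' S := by
  ext Y
  constructor
  · rintro ⟨X, hX, ⟨e⟩⟩
    exact hS.1 ((shiftEquiv D n).unitIso.app X ≪≫ (shiftFunctor D (-n)).mapIso e.symm) hX
  · exact fun hY ↦ ⟨_, hY, ⟨((shiftEquiv D n).counitIso.app Y).symm⟩⟩

theorem IsSubcat.isSubcat_shiftSet [HasShift D ℤ] [∀ n : ℤ, (shiftFunctor D n).Additive]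
    {S : Set D} (hS : IsSubcat S) (n : ℤ) : IsSubcat (shiftSet S n) := by
  rw [hS.shiftSet_eq_preimage]
  exact hS.preimage _

end Additive

section Triangles

variable {P Q U X A : C} {a : P ⟶ U} {b : U ⟶ X} {c : X ⟶ P⟦(1 : ℤ)⟧}
  {f : Q ⟶ X} {g : X ⟶ A} {h : A ⟶ Q⟦(1 : ℤ)⟧} {f' : Q ⟶ U} {c' : A ⟶ P⟦(1 : ℤ)⟧}

theorem exists_compatible_lift_and_extension (hP : Triangle.mk a b c ∈ distTriang C)
    (hQ : Triangle.mk f g h ∈ distTriang C) (hfc : f ≫ c = 0) :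
    ∃ (f' : Q ⟶ U) (c' : A ⟶ P⟦(1 : ℤ)⟧),
      f' ≫ b = f ∧ g ≫ c' = c ∧ c' ≫ a⟦(1 : ℤ)⟧' + h ≫ f'⟦(1 : ℤ)⟧' = 0 := by
  obtain ⟨c', hgc'⟩ : ∃ c' : A ⟶ P⟦(1 : ℤ)⟧, c = g ≫ c' := Triangle.yoneda_exact₂ _ hQ c hfc
  obtain ⟨f', hf'b, hhf'⟩ :
      ∃ f' : Q ⟶ U, f ≫ 𝟙 X = f' ≫ b ∧ h ≫ f'⟦(1 : ℤ)⟧' = c' ≫ (-a⟦(1 : ℤ)⟧') :=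
    complete_distinguished_triangle_morphism₁ _ _ hQ (rot_of_distTriang _ hP) (𝟙 X) c'
      (hgc'.symm.trans (Category.id_comp c).symm)
  refine ⟨f', c', ?_, hgc'.symm, ?_⟩
  · rw [← hf'b, Category.comp_id]
  · rw [hhf', Preadditive.comp_neg, add_neg_cancel]

theorem exists_factorization_of_comp_eq_zero (hP : Triangle.mk a b c ∈ distTriang C)
    (hQ : Triangle.mk f g h ∈ distTriang C) (hf' : f' ≫ b = f) {W : C} {n : U ⟶ W}
    (han : a ≫ n = 0) (hf'n : f' ≫ n = 0) : ∃ r : A ⟶ W, b ≫ g ≫ r = n := by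
  obtain ⟨ρ, hρ⟩ : ∃ ρ : X ⟶ W, n = b ≫ ρ := Triangle.yoneda_exact₂ _ hP n han
  have hfρ : f ≫ ρ = 0 := by rw [← hf', Category.assoc, ← hρ, hf'n]
  obtain ⟨r, hr⟩ : ∃ r : A ⟶ W, ρ = g ≫ r := Triangle.yoneda_exact₂ _ hQ ρ hfρ
  exact ⟨r, by rw [← hr, ← hρ]⟩

/-- Together with `hrel`, this says that `(c', h)` is a weak kernel of `(a⟦1⟧, f'⟦1⟧)`. -/
theorem exists_weakKernel_lift (hP : Triangle.mk a b c ∈ distTriang C)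
    (hQ : Triangle.mk f g h ∈ distTriang C) (hf' : f' ≫ b = f) (hc' : g ≫ c' = c)
    (hrel : c' ≫ a⟦(1 : ℤ)⟧' + h ≫ f'⟦(1 : ℤ)⟧' = 0) {W : C}
    {x : W ⟶ P⟦(1 : ℤ)⟧} {y : W ⟶ Q⟦(1 : ℤ)⟧} (hxy : x ≫ a⟦(1 : ℤ)⟧' + y ≫ f'⟦(1 : ℤ)⟧' = 0) :
    ∃ w : W ⟶ A, w ≫ c' = x ∧ w ≫ h = y := by
  have hab : a ≫ b = 0 := comp_distTriang_mor_zero₁₂ _ hP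
  have hgh : g ≫ h = 0 := comp_distTriang_mor_zero₂₃ _ hQ
  have hyf : y ≫ f⟦(1 : ℤ)⟧' = 0 := by
    simpa only [Preadditive.add_comp, Category.assoc, ← Functor.map_comp, hab, hf',
      Functor.map_zero, comp_zero, zero_add, zero_comp] using hxy =≫ b⟦(1 : ℤ)⟧'
  obtain ⟨w, rfl⟩ : ∃ w : W ⟶ A, y = w ≫ h := Triangle.coyoneda_exact₁ _ hQ y hyf
  have hdiff : (x - w ≫ c') ≫ a⟦(1 : ℤ)⟧' = 0 := by
    have hw : w ≫ c' ≫ a⟦(1 : ℤ)⟧' + w ≫ h ≫ f'⟦(1 : ℤ)⟧' = 0 := by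
      rw [← Preadditive.comp_add, hrel, comp_zero]
    rw [Preadditive.sub_comp, Category.assoc, sub_eq_zero]
    exact add_right_cancel ((Category.assoc w h _ ▸ hxy).trans hw.symm)
  obtain ⟨t, ht⟩ : ∃ t : W ⟶ X, x - w ≫ c' = t ≫ c := Triangle.coyoneda_exact₁ _ hP _ hdiff
  refine ⟨w + t ≫ g, ?_, ?_⟩
  · rw [Preadditive.add_comp, Category.assoc, hc', ← ht, add_sub_cancel]
  · rw [Preadditive.add_comp, Category.assoc, hgh, comp_zero, add_zero]

theorem isRetractOf_biprod_of_distTriang_biprod_desc (hP : Triangle.mk a b c ∈ distTriang C)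
    (hQ : Triangle.mk f g h ∈ distTriang C) (hf' : f' ≫ b = f) (hc' : g ≫ c' = c)
    (hrel : c' ≫ a⟦(1 : ℤ)⟧' + h ≫ f'⟦(1 : ℤ)⟧' = 0) {W : C} {n : U ⟶ W}
    {d : W ⟶ (P ⊞ Q)⟦(1 : ℤ)⟧} (hW : Triangle.mk (biprod.desc a f') n d ∈ distTriang C) :
    IsRetractOf W (A ⊞ A) := by
  have hmn : biprod.desc a f' ≫ n = 0 := comp_distTriang_mor_zero₁₂ _ hW
  have hdm : d ≫ (biprod.desc a f')⟦(1 : ℤ)⟧' = 0 := comp_distTriang_mor_zero₃₁ _ hW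
  obtain ⟨r, hr⟩ : ∃ r : A ⟶ W, b ≫ g ≫ r = n := by
    apply exists_factorization_of_comp_eq_zero hP hQ hf'
    · rw [← biprod.inl_desc a f', Category.assoc, hmn, comp_zero]
    · rw [← biprod.inr_desc a f', Category.assoc, hmn, comp_zero]
  obtain ⟨δ, hδc', hδh⟩ := exists_map_biprod_lift (shiftFunctor C (1 : ℤ)) c' h
  have hδm : δ ≫ (biprod.desc a f')⟦(1 : ℤ)⟧' = 0 := by
    rw [comp_map_biprod_desc, hδc', hδh, hrel]
  obtain ⟨u, hu⟩ : ∃ u : A ⟶ W, δ = u ≫ d := Triangle.coyoneda_exact₁ _ hW δ hδm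
  obtain ⟨w, hwc', hwh⟩ :=
    exists_weakKernel_lift hP hQ hf' hc' hrel ((comp_map_biprod_desc _ d a f').symm.trans hdm)
  have hwδ : w ≫ δ = d := map_biprod_hom_ext (shiftFunctor C (1 : ℤ))
    (by rw [Category.assoc, hδc', hwc']) (by rw [Category.assoc, hδh, hwh])
  have hwud : (𝟙 W - w ≫ u) ≫ d = 0 := by
    rw [Preadditive.sub_comp, Category.id_comp, Category.assoc, ← hu, hwδ, sub_self]
  obtain ⟨l, hl⟩ : ∃ l : W ⟶ U, 𝟙 W - w ≫ u = l ≫ n := Triangle.coyoneda_exact₃ _ hW _ hwud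
  have hid : w ≫ u + (l ≫ b ≫ g) ≫ r = 𝟙 W := by
    rw [Category.assoc, Category.assoc, hr, ← hl, add_sub_cancel]
  exact isRetractOf_biprod_of_comp_add_comp_eq_id hid

theorem extension_mem_twoTerm_general {𝓐 𝓑 : Set C} (h𝓐 : IsSubcat 𝓐) (h𝓑 : IsSubcat 𝓑)
    (hrigid : IsRigidSubcat 𝓐) (hP : P ∈ 𝓐) (hX : X ∈ starSet 𝓐 𝓑)
    (htri : Triangle.mk a b c ∈ distTriang C) : U ∈ starSet 𝓐 𝓑 := by
  obtain ⟨Q, hQ, A, hA, f, g, h, hT⟩ := hX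
  have hfc : f ≫ c = 0 := hrigid Q hQ P hP _
  obtain ⟨f', c', hf', hc', hrel⟩ := exists_compatible_lift_and_extension htri hT hfc
  obtain ⟨W, n, d, hW⟩ := distinguished_cocone_triangle (biprod.desc a f')
  have hretract : IsRetractOf W (A ⊞ A) :=
    isRetractOf_biprod_of_distTriang_biprod_desc htri hT hf' hc' hrel hW
  exact ⟨P ⊞ Q, h𝓐.biprod_mem hP hQ, W, h𝓑.2.2 (h𝓑.biprod_mem hA hA) hretract,
    biprod.desc a f', n, d, hW⟩

end Triangles

/-- **Lemma (Statement 17).** Let `𝓡` be a rigid subcategory of `C`, `R₀ ∈ 𝓡` and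
`X ∈ 𝓡 ∗ 𝓡[1]`. If `R₀ → U → X → R₀⟦1⟧` is a triangle in `C`, then `U ∈ 𝓡 ∗ 𝓡[1]`. -/
theorem extension_mem_twoTerm
    (k : Type*) [Field k] [IsAlgClosed k] [Linear k C]
    [∀ X Y : C, FiniteDimensional k (X ⟶ Y)] [IsIdempotentComplete C]
    (𝓡 : Set C) (h𝓡sub : IsSubcat 𝓡) (h𝓡 : IsRigidSubcat 𝓡)
    (R₀ U X : C) (hR₀ : R₀ ∈ 𝓡) (hX : X ∈ twoTerm 𝓡)
    (a : R₀ ⟶ U) (b : U ⟶ X) (c : X ⟶ R₀⟦(1:ℤ)⟧)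
    (htri : Triangle.mk a b c ∈ distTriang C) :
    U ∈ twoTerm 𝓡 :=
  extension_mem_twoTerm_general h𝓡sub (h𝓡sub.isSubcat_shiftSet 1) h𝓡 hR₀ hX htri
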